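/- Let Z = V + iU be an n×n complex symmetric matrix with U positive definite, and let K = (I + iZ)(I − iZ)⁻¹. Then U = (I + K)⁻¹ (I − K K̄) (I + K̄)⁻¹, where K̄ denotes entrywise complex conjugation. -/

import Mathlib

open Matrix Complex
open scoped ComplexOrder

lemma posSemidef_map_ofReal {n : ℕ} (U : Matrix (Fin n) (Fin n) ℝ) (h : U.PosDef) :
    (U.map Complex.ofReal).PosSemidef := by
  obtain ⟨B, hB⟩ : ∃ B : Matrix (Fin n) (Fin n) ℝ, U = Bᴴ * B := by
    open scoped MatrixOrder in
    obtain ⟨B, hB⟩ := CStarAlgebra.nonneg_iff_eq_star_mul_self.mp h.posSemidef.nonneg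
    exact ⟨B, hB⟩
  have : U.map Complex.ofReal = (B.map Complex.ofReal)ᴴ * (B.map Complex.ofReal) := by
    ext i j
    simp [hB, Matrix.mul_apply]
  rw [this]
  exact posSemidef_conjTranspose_mul_self _

lemma isUnit_det_aux {n : ℕ} (A P : Matrix (Fin n) (Fin n) ℂ) (hP : P.PosDef)
    (h : A + Aᴴ = P) : IsUnit A.det := by
  rw [isUnit_iff_ne_zero]
  intro h0
  obtain ⟨v, hv, hAv⟩ := Matrix.exists_mulVec_eq_zero_iff.mpr h0
  have h1 := hP.dotProduct_mulVec_pos hv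
  have h2 : star v ⬝ᵥ (Aᴴ *ᵥ v) = 0 := by
    rw [dotProduct_mulVec, ← star_mulVec, hAv]
    simp
  rw [← h, add_mulVec, dotProduct_add, h2, hAv] at h1
  simp at h1

theorem stmt_3 {n : ℕ} (V U : Matrix (Fin n) (Fin n) ℝ)
    (hV : V = Vᵀ) (hU : U = Uᵀ) (hUpd : U.PosDef)
    (Z K : Matrix (Fin n) (Fin n) ℂ)
    (hZ : Z = V.map Complex.ofReal + Complex.I • U.map Complex.ofReal)
    (hK : K = (1 + Complex.I • Z) * (1 - Complex.I • Z)⁻¹) :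
    U.map Complex.ofReal
      = (1 + K)⁻¹ * (1 - K * K.map (starRingEnd ℂ))
          * (1 + K.map (starRingEnd ℂ))⁻¹ := by
  have hVs : ∀ i j, V j i = V i j := fun i j => (congrFun (congrFun hV i) j).symm
  have hUs : ∀ i j, U j i = U i j := fun i j => (congrFun (congrFun hU i) j).symm
  obtain ⟨A, hA⟩ : ∃ A, A = 1 - Complex.I • Z := ⟨_, rfl⟩
  have hAe : ∀ i j, A i j = (1 : Matrix (Fin n) (Fin n) ℂ) i j + U i j - Complex.I * V i j := by
    intro i j
    simp only [hA, hZ, Matrix.sub_apply, Matrix.smul_apply, Matrix.add_apply, Matrix.map_apply, smul_eq_mul]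
    linear_combination (- (U i j : ℂ)) * Complex.I_mul_I
  have h1s : ∀ i j, (starRingEnd ℂ) ((1 : Matrix (Fin n) (Fin n) ℂ) i j)
      = (1 : Matrix (Fin n) (Fin n) ℂ) i j := by
    intro i j
    by_cases h : i = j <;> simp [Matrix.one_apply, h]
  have h1t : ∀ i j, (1 : Matrix (Fin n) (Fin n) ℂ) j i = (1 : Matrix (Fin n) (Fin n) ℂ) i j := by
    intro i j
    simp [Matrix.one_apply, eq_comm]
  obtain ⟨B, hB⟩ : ∃ B, B = A.map (starRingEnd ℂ) := ⟨_, rfl⟩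
  have hAB : A + B = (2:ℂ) • (1 + U.map Complex.ofReal) := by
    ext i j
    simp only [hB, Matrix.add_apply, Matrix.map_apply, hAe, map_add, map_sub, map_mul, h1s, conj_ofReal, conj_I,
      Matrix.smul_apply, smul_eq_mul]
    ring
  have hBH : B = Aᴴ := by
    ext i j
    simp only [hB, Matrix.map_apply, hAe, conjTranspose_apply, hVs i j, hUs i j, h1t i j]
    rfl
  have hpd : ((2:ℂ) • (1 + U.map Complex.ofReal)).PosDef :=
    (PosDef.one.add_posSemidef (posSemidef_map_ofReal U hUpd)).smul (by norm_num)
  have hdA : IsUnit A.det := isUnit_det_aux A _ hpd (by rw [← hBH, hAB])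
  have hdB : IsUnit B.det := by
    rw [hBH, det_conjTranspose]; exact hdA.star
  have hK1 : K = (2:ℂ) • A⁻¹ - 1 := by
    have : 1 + Complex.I • Z = (2:ℂ) • 1 - A := by rw [hA, two_smul]; abel
    rw [hK, ← hA, this, sub_mul, mul_nonsing_inv _ hdA, smul_mul_assoc, one_mul]
  have hBi : (A⁻¹).map (starRingEnd ℂ) = B⁻¹ := by
    symm
    apply inv_eq_right_inv
    rw [hB, ← Matrix.map_mul, mul_nonsing_inv _ hdA]
    ext i j; exact h1s i j
  have hK2 : K.map (starRingEnd ℂ) = (2:ℂ) • B⁻¹ - 1 := by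
    rw [← hBi, hK1]
    ext i j
    simp only [Matrix.map_apply, Matrix.sub_apply, Matrix.smul_apply, smul_eq_mul, map_sub, map_mul, h1s]
    rw [show (starRingEnd ℂ) 2 = 2 from map_ofNat (starRingEnd ℂ) 2]
  have hi : ∀ C : Matrix (Fin n) (Fin n) ℂ, IsUnit C.det →
      (1 + ((2:ℂ) • C⁻¹ - 1))⁻¹ = (1/2:ℂ) • C := by
    intro C hC
    apply inv_eq_right_inv
    rw [add_sub_cancel, smul_mul_smul_comm, nonsing_inv_mul _ hC]
    norm_num
  have hU' : U.map Complex.ofReal = (1/2:ℂ) • (A + B) - 1 := by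
    rw [hAB, smul_smul]; norm_num
  have e : 1 - ((2:ℂ) • A⁻¹ - 1) * ((2:ℂ) • B⁻¹ - 1)
      = (2:ℂ) • A⁻¹ + (2:ℂ) • B⁻¹ - (4:ℂ) • (A⁻¹ * B⁻¹) := by
    rw [sub_mul, mul_sub, smul_mul_smul_comm]
    norm_num
    abel
  have hAA := mul_nonsing_inv _ hdA
  have hBB := nonsing_inv_mul _ hdB
  rw [hK2, hK1, hi A hdA, hi B hdB, e, hU']
  simp only [mul_add, add_mul, mul_sub, sub_mul, smul_mul_assoc, mul_smul_comm, smul_smul]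
  rw [← Matrix.mul_assoc A A⁻¹ B⁻¹, hAA, Matrix.mul_assoc A B⁻¹ B, one_mul, one_mul, hBB, mul_one]
  module
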